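/- Let R be a ring, and let W and X be classes of left R-modules. Suppose 0 → X_1 → X_2 → X_3 → 0 is a short exact sequence with X_1, X_2, X_3 ∈ X, and that there are short exact sequences 0 → X_1 → W_1 → X_1' → 0 and 0 → X_3 → W_3 → X_3' → 0 with W_1, W_3 ∈ W, X_1', X_3' ∈ X, such that Ext^1_R(X_3, W_1) = 0. Then there is an R-module X_2' and a commutative 3×3 diagram with exact rows and columns whose rows are 0 → X_1 → X_2 → X_3 → 0, 0 → W_1 → W_1 ⊕ W_3 → W_3 → 0 and 0 → X_1' → X_2' → X_3' → 0, and whose outer columns are the two given short exact sequences. -/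

import Mathlib

open CategoryTheory CategoryTheory.Limits Opposite
open scoped DirectSum

universe w v u

namespace QuiverGF


section Cat

variable {A : Type u} [Category.{v} A] [Abelian A]

/-- `Ext¹(X,Y) = 0`, expressed as: every short exact sequence `0 → Y → E → X → 0` splits. -/
def ext1Zero (X Y : A) : Prop :=
  ∀ (E : A) (f : Y ⟶ E) (g : E ⟶ X) (w : f ≫ g = 0),
    (ShortComplex.mk f g w).ShortExact → ∃ s : X ⟶ E, s ≫ g = 𝟙 X

/-- `extHigherZero n X Y` encodes `Ext^{n+1}(X,Y) = 0`, defined by dimension shifting along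
short exact sequences `0 → Y → I → Z → 0` with `I` injective. -/
def extHigherZero : ℕ → A → A → Prop
  | 0 => fun X Y => ext1Zero X Y
  | n + 1 => fun X Y => ∀ (I Z : A) (f : Y ⟶ I) (g : I ⟶ Z) (w : f ≫ g = 0),
      Injective I → (ShortComplex.mk f g w).ShortExact → extHigherZero n X Z

/-- The right `Ext¹`-orthogonal class. -/
def rightPerp (S : Set A) : Set A := {Y | ∀ X ∈ S, ext1Zero X Y}

/-- The left `Ext¹`-orthogonal class. -/
def leftPerp (S : Set A) : Set A := {X | ∀ Y ∈ S, ext1Zero X Y}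

/-- `(X, Y)` is a cotorsion pair. -/
structure IsCotorsionPair (X Y : Set A) : Prop where
  right_eq : Y = rightPerp X
  left_eq : X = leftPerp Y

/-- Completeness of a pair of classes: every object admits approximation sequences. -/
def IsCompleteCP (X Y : Set A) : Prop :=
  (∀ M : A, ∃ (YM XM : A) (f : M ⟶ YM) (g : YM ⟶ XM) (w : f ≫ g = 0),
     (ShortComplex.mk f g w).ShortExact ∧ YM ∈ Y ∧ XM ∈ X) ∧
  (∀ M : A, ∃ (YM XM : A) (f : YM ⟶ XM) (g : XM ⟶ M) (w : f ≫ g = 0),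
     (ShortComplex.mk f g w).ShortExact ∧ YM ∈ Y ∧ XM ∈ X)

/-- Heredity: `Ext^i(X,Y) = 0` for all `i ≥ 1`. -/
def IsHereditaryCP (X Y : Set A) : Prop :=
  ∀ M ∈ X, ∀ N ∈ Y, ∀ n : ℕ, extHigherZero n M N

/-- A thick class of objects. -/
structure IsThick (W : Set A) : Prop where
  summand : ∀ Z ∈ W, ∀ (X : A) (i : X ⟶ Z) (r : Z ⟶ X), i ≫ r = 𝟙 X → X ∈ W
  ext_closed : ∀ (S : ShortComplex A), S.ShortExact → S.X₁ ∈ W → S.X₃ ∈ W → S.X₂ ∈ W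
  ker_epi : ∀ (S : ShortComplex A), S.ShortExact → S.X₂ ∈ W → S.X₃ ∈ W → S.X₁ ∈ W
  coker_mono : ∀ (S : ShortComplex A), S.ShortExact → S.X₁ ∈ W → S.X₂ ∈ W → S.X₃ ∈ W

/-- A Hovey triple. -/
structure IsHoveyTriple (C W F : Set A) : Prop where
  thick : IsThick W
  cp1 : IsCotorsionPair C (W ∩ F)
  cp1_complete : IsCompleteCP C (W ∩ F)
  cp2 : IsCotorsionPair (C ∩ W) F
  cp2_complete : IsCompleteCP (C ∩ W) F

/-- A hereditary Hovey triple. -/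
structure IsHereditaryHoveyTriple (C W F : Set A) extends IsHoveyTriple C W F : Prop where
  cp1_hereditary : IsHereditaryCP C (W ∩ F)
  cp2_hereditary : IsHereditaryCP (C ∩ W) F

/-- `f : C ⟶ M` is an `S`-cover of `M`. -/
def IsCover (S : Set A) {C M : A} (f : C ⟶ M) : Prop :=
  C ∈ S ∧ (∀ C' ∈ S, ∀ g : C' ⟶ M, ∃ h : C' ⟶ C, h ≫ f = g) ∧
    (∀ h : C ⟶ C, h ≫ f = f → IsIso h)

/-- `f : M ⟶ E` is an `S`-envelope of `M`. -/
def IsEnvelope (S : Set A) {M E : A} (f : M ⟶ E) : Prop :=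
  E ∈ S ∧ (∀ E' ∈ S, ∀ g : M ⟶ E', ∃ h : E ⟶ E', f ≫ h = g) ∧
    (∀ h : E ⟶ E, f ≫ h = f → IsIso h)

/-- A perfect pair of classes: X-covers and Y-envelopes always exist. -/
def IsPerfectCP (X Y : Set A) : Prop :=
  (∀ M : A, ∃ (C : A) (f : C ⟶ M), IsCover X f) ∧
  (∀ M : A, ∃ (E : A) (f : M ⟶ E), IsEnvelope Y f)

/-- `W` is a cogenerator for `X`. -/
def IsCogenerator (W X : Set A) : Prop :=
  W ⊆ X ∧ ∀ M ∈ X, ∃ (W' X' : A) (f : M ⟶ W') (g : W' ⟶ X') (w : f ≫ g = 0),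
    (ShortComplex.mk f g w).ShortExact ∧ W' ∈ W ∧ X' ∈ X

end Cat

section Quiver

variable (V : Type w) [Quiver.{w} V]

/-- A quiver is left rooted if it has no infinite sequence of arrows `• → • → • → ⋯`. -/
def LeftRooted : Prop := ¬ ∃ f : ℕ → V, ∀ n : ℕ, Nonempty (f n ⟶ f (n + 1))

variable {V}
variable {A : Type u} [Category.{v} A]

/-- A vertex of `V`, seen as an object of the path category. -/
abbrev vtx (i : V) : Paths V := i

section Phi

variable [Abelian A] [HasCoproducts.{w} A]

/-- The canonical morphism `φᵢˣ : ⊕_{a : j ⟶ i} X(j) ⟶ X(i)`. -/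
noncomputable def phi (X : Paths V ⥤ A) (i : V) :
    (∐ fun p : Σ j : V, j ⟶ i => X.obj (vtx p.1)) ⟶ X.obj (vtx i) :=
  Sigma.desc fun p => X.map p.2.toPath

/-- The class `Φ(S)` of representations. -/
noncomputable def PhiClass (S : Set A) : Set (Paths V ⥤ A) :=
  {X | ∀ i : V, Mono (phi X i) ∧ X.obj (vtx i) ∈ S ∧ cokernel (phi X i) ∈ S}

end Phi

/-- The class of representations with all vertex values in `S`. -/
def RepClass (S : Set A) : Set (Paths V ⥤ A) := {X | ∀ i : V, X.obj (vtx i) ∈ S}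

section Psi

variable [Abelian A] [HasProducts.{w} A]

/-- The canonical morphism `ψᵢʸ : Y(i) ⟶ Π_{a : i ⟶ j} Y(j)`. -/
noncomputable def psi (Y : Paths V ⥤ A) (i : V) :
    Y.obj (vtx i) ⟶ ∏ᶜ fun p : Σ j : V, i ⟶ j => Y.obj (vtx p.1) :=
  Pi.lift fun p => Y.map p.2.toPath

/-- The class `Ψ(S)` of representations. -/
noncomputable def PsiClass (S : Set A) : Set (Paths V ⥤ A) :=
  {Y | ∀ i : V, Epi (psi Y i) ∧ Y.obj (vtx i) ∈ S ∧ kernel (psi Y i) ∈ S}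

end Psi

end Quiver




section NcTensor

variable (R : Type u) [Ring R]

variable (E : Type u) [AddCommGroup E] [Module Rᵐᵒᵖ E]
variable (M : Type u) [AddCommGroup M] [Module R M]

/-- The defining relations of the tensor product `E ⊗_R M` of a right `R`-module `E`
and a left `R`-module `M` over a (possibly noncommutative) ring `R`. -/
def ncRel : Submodule ℤ (TensorProduct ℤ E M) :=
  Submodule.span ℤ {z | ∃ (e : E) (r : R) (m : M),
    z = (MulOpposite.op r • e) ⊗ₜ[ℤ] m - e ⊗ₜ[ℤ] (r • m)}

/-- The tensor product `E ⊗_R M` of a right `R`-module `E` and a left `R`-module `M`. -/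
abbrev NcTensor := TensorProduct ℤ E M ⧸ ncRel R E M

/-- The canonical generator `e ⊗ m` of `E ⊗_R M`. -/
noncomputable def NcTensor.tmul (e : E) (m : M) : NcTensor R E M :=
  Submodule.Quotient.mk (e ⊗ₜ[ℤ] m)

variable {E M}
variable {E' : Type u} [AddCommGroup E'] [Module Rᵐᵒᵖ E']
variable {M' : Type u} [AddCommGroup M'] [Module R M']

/-- Functoriality of the tensor product. -/
noncomputable def NcTensor.map (f : E →ₗ[Rᵐᵒᵖ] E') (g : M →ₗ[R] M') :
    NcTensor R E M →ₗ[ℤ] NcTensor R E' M' :=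
  Submodule.mapQ _ _
    (TensorProduct.map f.toAddMonoidHom.toIntLinearMap g.toAddMonoidHom.toIntLinearMap)
    (by
      refine Submodule.span_le.2 ?_
      rintro z ⟨e, r, m, rfl⟩
      refine Submodule.mem_comap.2 (Submodule.subset_span ?_)
      exact ⟨f e, r, g m,
        (map_sub (TensorProduct.map f.toAddMonoidHom.toIntLinearMap
          g.toAddMonoidHom.toIntLinearMap) _ _).trans
        (congrArg₂ (fun x y => x ⊗ₜ[ℤ] g m - f e ⊗ₜ[ℤ] y)
          (map_smul f (MulOpposite.op r) e) (map_smul g r m))⟩)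

@[simp] lemma NcTensor.map_tmul (f : E →ₗ[Rᵐᵒᵖ] E') (g : M →ₗ[R] M') (e : E) (m : M) :
    NcTensor.map R f g (NcTensor.tmul R E M e m) = NcTensor.tmul R E' M' (f e) (g m) := by
  rfl

end NcTensor

section ModuleClasses

variable (R : Type u) [Ring R]

/-- A left `R`-module is flat if tensoring with it preserves injections of right `R`-modules. -/
def IsFlatModule (M : ModuleCat.{u} R) : Prop :=
  ∀ (E E' : ModuleCat.{u} Rᵐᵒᵖ) (f : E ⟶ E'), Function.Injective f →
    Function.Injective (NcTensor.map R (f.hom : ↑E →ₗ[Rᵐᵒᵖ] ↑E') (LinearMap.id (M := ↑M)))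

/-- Gorenstein flat left `R`-modules: cycles of exact complexes of flat modules which stay
exact after tensoring with any injective right `R`-module. -/
def IsGorensteinFlatModule (M : ModuleCat.{u} R) : Prop :=
  ∃ (F : ℤ → ModuleCat.{u} R) (d : ∀ n : ℤ, F n ⟶ F (n + 1)),
    (∀ n, IsFlatModule R (F n)) ∧
    (∀ n, Function.Exact (d n) (d (n + 1))) ∧
    Nonempty (↑M ≃ₗ[R] ↥(LinearMap.ker ((d 0).hom : ↑(F 0) →ₗ[R] ↑(F (0 + 1))))) ∧
    ∀ (E : ModuleCat.{u} Rᵐᵒᵖ), Injective E → ∀ n : ℤ,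
      Function.Exact (NcTensor.map R (LinearMap.id (M := ↑E)) ((d n).hom : ↑(F n) →ₗ[R] ↑(F (n + 1))))
        (NcTensor.map R (LinearMap.id (M := ↑E)) ((d (n + 1)).hom : ↑(F (n + 1)) →ₗ[R] ↑(F (n + 1 + 1))))

/-- Projectively coresolved Gorenstein flat left `R`-modules. -/
def IsPGFModule (M : ModuleCat.{u} R) : Prop :=
  ∃ (P : ℤ → ModuleCat.{u} R) (d : ∀ n : ℤ, P n ⟶ P (n + 1)),
    (∀ n, Projective (P n)) ∧
    (∀ n, Function.Exact (d n) (d (n + 1))) ∧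
    Nonempty (↑M ≃ₗ[R] ↥(LinearMap.ker ((d 0).hom : ↑(P 0) →ₗ[R] ↑(P (0 + 1))))) ∧
    ∀ (E : ModuleCat.{u} Rᵐᵒᵖ), Injective E → ∀ n : ℤ,
      Function.Exact (NcTensor.map R (LinearMap.id (M := ↑E)) ((d n).hom : ↑(P n) →ₗ[R] ↑(P (n + 1))))
        (NcTensor.map R (LinearMap.id (M := ↑E)) ((d (n + 1)).hom : ↑(P (n + 1)) →ₗ[R] ↑(P (n + 1 + 1))))

/-- Gorenstein injective objects of an abelian category. -/
def IsGorensteinInjective {A : Type*} [Category A] [Abelian A] (M : A) : Prop :=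
  ∃ (I : ℤ → A) (d : ∀ n : ℤ, I n ⟶ I (n + 1)),
    (∀ n, Injective (I n)) ∧
    (∀ n, ∃ w : d n ≫ d (n + 1) = 0, (ShortComplex.mk (d n) (d (n + 1)) w).Exact) ∧
    Nonempty (M ≅ kernel (d 0)) ∧
    ∀ (E : A), Injective E → ∀ n : ℤ,
      Function.Exact (fun f : E ⟶ I n => f ≫ d n) (fun f : E ⟶ I (n + 1) => f ≫ d (n + 1))

end ModuleClasses



section Char

variable (R : Type u) [Ring R] (G : Type u) [AddCommGroup G]

section Left
variable (M : Type u) [AddCommGroup M] [Module R M]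

/-- Right `R`-action on `Hom_ℤ(M, G)` for a left `R`-module `M`. -/
instance : SMul Rᵐᵒᵖ (M →+ G) :=
  ⟨fun r f => f.comp (DistribMulAction.toAddMonoidHom M r.unop)⟩

@[simp] lemma op_smul_addHom_apply (r : Rᵐᵒᵖ) (f : M →+ G) (m : M) :
    (r • f) m = f (r.unop • m) := rfl

instance charRight : Module Rᵐᵒᵖ (M →+ G) where
  one_smul f := AddMonoidHom.ext fun m => by simp
  mul_smul r s f := AddMonoidHom.ext fun m => by simp [mul_smul]
  smul_zero r := AddMonoidHom.ext fun m => rfl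
  smul_add r f g := AddMonoidHom.ext fun m => rfl
  add_smul r s f := AddMonoidHom.ext fun m => by simp [add_smul]
  zero_smul f := AddMonoidHom.ext fun m => by simp

end Left

section Right
variable (N : Type u) [AddCommGroup N] [Module Rᵐᵒᵖ N]

/-- Left `R`-action on `Hom_ℤ(N, G)` for a right `R`-module `N`. -/
instance : SMul R (N →+ G) :=
  ⟨fun r f => f.comp (DistribMulAction.toAddMonoidHom N (MulOpposite.op r))⟩

@[simp] lemma smul_addHom_apply (r : R) (f : N →+ G) (n : N) :
    (r • f) n = f (MulOpposite.op r • n) := rfl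

instance charLeft : Module R (N →+ G) where
  one_smul f := AddMonoidHom.ext fun n => by simp
  mul_smul r s f := AddMonoidHom.ext fun n => by simp [MulOpposite.op_mul, mul_smul]
  smul_zero r := AddMonoidHom.ext fun n => rfl
  smul_add r f g := AddMonoidHom.ext fun n => rfl
  add_smul r s f := AddMonoidHom.ext fun n => by simp [add_smul]
  zero_smul f := AddMonoidHom.ext fun n => by simp

end Right

section Precomp

variable {R G}
variable {M N : Type u} [AddCommGroup M] [AddCommGroup N] [Module R M] [Module R N]

/-- Precomposition, as an `Rᵐᵒᵖ`-linear map between character modules. -/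
def precompHom (h : M →ₗ[R] N) : (N →+ G) →ₗ[Rᵐᵒᵖ] (M →+ G) where
  toFun f := f.comp h.toAddMonoidHom
  map_add' f g := rfl
  map_smul' r f := AddMonoidHom.ext fun m => by simp [map_smul]

variable {P Q : Type u} [AddCommGroup P] [AddCommGroup Q] [Module Rᵐᵒᵖ P] [Module Rᵐᵒᵖ Q]

/-- Precomposition, as an `R`-linear map between character modules of right modules. -/
def precompHomOp (h : P →ₗ[Rᵐᵒᵖ] Q) : (Q →+ G) →ₗ[R] (P →+ G) where
  toFun f := f.comp h.toAddMonoidHom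
  map_add' f g := rfl
  map_smul' r f := AddMonoidHom.ext fun p => by simp [map_smul]

end Precomp

end Char


section Reps

variable (V : Type u) [Quiver.{u} V] (R : Type u) [Ring R]

/-- The category of representations of the quiver `V` with values in left `R`-modules. -/
abbrev RepL := Paths V ⥤ ModuleCat.{u} R

/-- The category of representations of the opposite quiver with values in right `R`-modules. -/
abbrev RepR := Paths Vᵒᵖ ⥤ ModuleCat.{u} Rᵐᵒᵖ

/-- A vertex of `V`, seen as an object of the path category. -/
abbrev vtx' {V : Type u} [Quiver.{u} V] (i : V) : Paths V := i

/-- The representation `Hom(X, G) ∈ Rep(Qᵒᵖ, Rᵒᵖ)`, given vertexwise by `Hom_ℤ(X(i), G)`. -/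
noncomputable def HomRepObj (X : RepL V R) (G : Type u) [AddCommGroup G] : RepR V R :=
  Paths.lift
    { obj := fun x => ModuleCat.of Rᵐᵒᵖ (↑(X.obj (vtx' x.unop)) →+ G)
      map := fun {x y} a =>
        ModuleCat.ofHom (precompHom (G := G) ((X.map a.unop.toPath).hom : ↑(X.obj (vtx' y.unop)) →ₗ[R] ↑(X.obj (vtx' x.unop))) :
          _ →ₗ[Rᵐᵒᵖ] _) }

/-- The representation `Hom(Y, G) ∈ Rep(Q, R)` for `Y ∈ Rep(Qᵒᵖ, Rᵒᵖ)`. -/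
noncomputable def HomRepObjOp (Y : RepR V R) (G : Type u) [AddCommGroup G] : RepL V R :=
  Paths.lift
    { obj := fun i => ModuleCat.of R (↑(Y.obj (vtx' (op i))) →+ G)
      map := fun {i j} a =>
        ModuleCat.ofHom (precompHomOp (G := G) ((Y.map a.op.toPath).hom : ↑(Y.obj (vtx' (op j))) →ₗ[Rᵐᵒᵖ] ↑(Y.obj (vtx' (op i)))) :
          _ →ₗ[R] _) }

/-- The character representation `X⁺ = Hom(X, ℚ/ℤ)`. -/
noncomputable def charRep (X : RepL V R) : RepR V R :=
  HomRepObj V R X (ULift.{u} (AddCircle (1 : ℚ)))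

section Tensor

variable {V R}

/-- The underlying group of the tensor product of representations before dividing out
by the relations coming from arrows. -/
noncomputable abbrev repTensorBase (Y : RepR V R) (X : RepL V R) : Type u :=
  ⨁ (i : V), NcTensor R (↑(Y.obj (vtx' (op i)))) (↑(X.obj (vtx' i)))

open scoped Classical in
/-- The relations defining the tensor product of representations. -/
noncomputable def repTensorRel (Y : RepR V R) (X : RepL V R) :
    @Submodule ℤ (repTensorBase Y X) _ AddCommGroup.toAddCommMonoid _ :=
  Submodule.span ℤ {z | ∃ (i j : V) (a : i ⟶ j) (y : ↑(Y.obj (vtx' (op j)))) (x : ↑(X.obj (vtx' i))),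
    z = DirectSum.of _ i (NcTensor.tmul R _ _ (Y.map a.op.toPath y) x)
      - DirectSum.of _ j (NcTensor.tmul R _ _ y (X.map a.toPath x))}

/-- The tensor product `Y ⊗_Q X` of representations, for `Y ∈ Rep(Qᵒᵖ, Rᵒᵖ)` and
`X ∈ Rep(Q, R)`. -/
noncomputable abbrev RepTensor (Y : RepR V R) (X : RepL V R) : Type u :=
  repTensorBase Y X ⧸ repTensorRel Y X

open scoped Classical in
/-- Functoriality of the tensor product of representations. -/
noncomputable def RepTensor.map {Y Y' : RepR V R} {X X' : RepL V R}
    (g : Y ⟶ Y') (f : X ⟶ X') : RepTensor Y X →ₗ[ℤ] RepTensor Y' X' :=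
  Submodule.mapQ _ _
    (DirectSum.toModule ℤ V (repTensorBase Y' X') fun i =>
      (DirectSum.lof ℤ V _ i).comp
        (NcTensor.map R ((g.app (vtx' (op i))).hom : _ →ₗ[Rᵐᵒᵖ] _) ((f.app (vtx' i)).hom : _ →ₗ[R] _)))
    (by
      refine Submodule.span_le.2 ?_
      rintro z ⟨i, j, a, y, x, rfl⟩
      refine Submodule.mem_comap.2 ?_
      rw [map_sub, ← DirectSum.lof_eq_of ℤ, ← DirectSum.lof_eq_of ℤ,
        DirectSum.toModule_lof, DirectSum.toModule_lof]
      refine Submodule.subset_span ?_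
      refine ⟨i, j, a, g.app (vtx' (op j)) y, f.app (vtx' i) x, ?_⟩
      have hg : g.app (vtx' (op i)) (Y.map a.op.toPath y)
          = Y'.map a.op.toPath (g.app (vtx' (op j)) y) := by
        have h := g.naturality (a.op.toPath : vtx' (op j) ⟶ vtx' (op i))
        exact LinearMap.congr_fun (congrArg ModuleCat.Hom.hom h) y
      have hf : f.app (vtx' j) (X.map a.toPath x)
          = X'.map a.toPath (f.app (vtx' i) x) := by
        have h := f.naturality (a.toPath : vtx' i ⟶ vtx' j)
        exact LinearMap.congr_fun (congrArg ModuleCat.Hom.hom h) x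
      simp only [LinearMap.comp_apply, NcTensor.map_tmul, DirectSum.lof_eq_of]
      rw [hg, hf])

end Tensor

end Reps




section More

variable (V : Type u) [Quiver.{u} V] (R : Type u) [Ring R]

/-- Cotorsion left `R`-modules. -/
def IsCotorsionModule (M : ModuleCat.{u} R) : Prop :=
  ∀ F : ModuleCat.{u} R, IsFlatModule R F → ext1Zero F M

/-- A right coherent ring: every finitely generated right ideal is finitely presented. -/
def RightCoherent : Prop :=
  ∀ I : Submodule Rᵐᵒᵖ R, I.FG → Module.FinitePresentation Rᵐᵒᵖ ↥I

/-- Flat representations: colimits of projective representations. -/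
def IsFlatRep (Xr : RepL V R) : Prop :=
  ∃ (J : Cat.{u, u}) (D : ↥J ⥤ RepL V R) (c : Limits.Cocone D),
    (∀ j, Projective (D.obj j)) ∧ Nonempty (Limits.IsColimit c) ∧ Nonempty (c.pt ≅ Xr)

/-- Gorenstein flat representations. -/
def IsGorensteinFlatRep (Xr : RepL V R) : Prop :=
  ∃ (F : ℤ → RepL V R) (d : ∀ n : ℤ, F (n + 1) ⟶ F n),
    (∀ n, IsFlatRep V R (F n)) ∧
    (∀ n, ∃ w : d (n + 1) ≫ d n = 0, (ShortComplex.mk (d (n + 1)) (d n) w).Exact) ∧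
    Nonempty (Xr ≅ cokernel (d 0)) ∧
    ∀ (E : RepR V R), Injective E → ∀ n : ℤ,
      Function.Exact (RepTensor.map (𝟙 E) (d (n + 1))) (RepTensor.map (𝟙 E) (d n))

/-- Projectively coresolved Gorenstein flat representations. -/
def IsPGFRep (Xr : RepL V R) : Prop :=
  ∃ (P : ℤ → RepL V R) (d : ∀ n : ℤ, P (n + 1) ⟶ P n),
    (∀ n, Projective (P n)) ∧
    (∀ n, ∃ w : d (n + 1) ≫ d n = 0, (ShortComplex.mk (d (n + 1)) (d n) w).Exact) ∧
    Nonempty (Xr ≅ cokernel (d 0)) ∧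
    ∀ (E : RepR V R), Injective E → ∀ n : ℤ,
      Function.Exact (RepTensor.map (𝟙 E) (d (n + 1))) (RepTensor.map (𝟙 E) (d n))

end More

section Swap

variable (R : Type u) [Ring R]
variable (M : Type u) [AddCommGroup M] [Module R M]
variable (E : Type u) [AddCommGroup E] [Module Rᵐᵒᵖ E]

/-- Relations for the tensor product `M ⊗_{Rᵒᵖ} E` of a right `Rᵒᵖ`-module `M`
and a left `Rᵒᵖ`-module `E`. -/
def ncRel' : Submodule ℤ (TensorProduct ℤ M E) :=
  Submodule.span ℤ {z | ∃ (m : M) (r : R) (e : E),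
    z = (r • m) ⊗ₜ[ℤ] e - m ⊗ₜ[ℤ] (MulOpposite.op r • e)}

/-- The tensor product `M ⊗_{Rᵒᵖ} E`. -/
abbrev NcTensorSwap := TensorProduct ℤ M E ⧸ ncRel' R M E

variable {M E}

/-- The generator `m ⊗ e` of `M ⊗_{Rᵒᵖ} E`. -/
noncomputable def NcTensorSwap.tmul (m : M) (e : E) : NcTensorSwap R M E :=
  Submodule.Quotient.mk (m ⊗ₜ[ℤ] e)

variable (V : Type u) [Quiver.{u} V]

/-- The base of the tensor product `X ⊗_{Qᵒᵖ} Y`. -/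
noncomputable abbrev repTensorSwapBase (X : RepL V R) (Y : RepR V R) : Type u :=
  ⨁ (i : V), NcTensorSwap R (↑(X.obj i)) (↑(Y.obj (op i)))

open scoped Classical in
/-- The relations of the tensor product `X ⊗_{Qᵒᵖ} Y`. -/
noncomputable def repTensorSwapRel (X : RepL V R) (Y : RepR V R) :
    @Submodule ℤ (repTensorSwapBase R V X Y) _ AddCommGroup.toAddCommMonoid _ :=
  Submodule.span ℤ {z | ∃ (j i : V) (a : j ⟶ i) (x : ↑(X.obj j)) (y : ↑(Y.obj (op i))),
    z = DirectSum.of _ i (NcTensorSwap.tmul R (X.map a.toPath x) y)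
      - DirectSum.of _ j (NcTensorSwap.tmul R x (Y.map a.op.toPath y))}

/-- The tensor product `X ⊗_{Qᵒᵖ} Y` of representations, i.e. the tensor product over the
opposite quiver of the opposite ring. -/
noncomputable abbrev RepTensorSwap (X : RepL V R) (Y : RepR V R) : Type u :=
  repTensorSwapBase R V X Y ⧸ repTensorSwapRel R V X Y

end Swap

section Eval

variable {V : Type u} [Quiver.{u} V] {R : Type u} [Ring R]

/-- Evaluation helper identifying the vertex value of `Hom(X, G)` with `Hom_ℤ(X(i), G)`. -/
def homRepEval (X : RepL V R) (G : Type u) [AddCommGroup G] {v : Vᵒᵖ}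
    (s : ↑((HomRepObj V R X G).obj v)) : ↑(X.obj v.unop) →+ G := s

/-- Evaluation helper identifying the vertex value of `Hom(Y, G)` with `Hom_ℤ(Y(i), G)`. -/
def homRepOpEval (Y : RepR V R) (G : Type u) [AddCommGroup G] {i : V}
    (s : ↑((HomRepObjOp V R Y G).obj i)) : ↑(Y.obj (op i)) →+ G := s

end Eval

end QuiverGF

section Statements

open CategoryTheory CategoryTheory.Limits Opposite QuiverGF
open scoped DirectSum

/-- The extension `p` factors through `a` when `Ext¹(X3, W1) = 0`. -/
theorem stmt10_extend {R : Type u} [Ring R] {X1 X2 X3 W1 : ModuleCat.{u} R}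
    (a : X1 ⟶ X2) (b : X2 ⟶ X3) (wab : a ≫ b = 0) (hab : (ShortComplex.mk a b wab).ShortExact)
    (p : X1 ⟶ W1) (hext : ext1Zero X3 W1) : ∃ h : X2 ⟶ W1, a ≫ h = p := by
  have : Mono a := hab.mono_f
  have : Epi b := hab.epi_g
  let g : pushout a p ⟶ X3 := pushout.desc b 0 (by rw [wab, comp_zero])
  have hg1 : pushout.inl a p ≫ g = b := pushout.inl_desc _ _ _
  have hg2 : pushout.inr a p ≫ g = 0 := pushout.inr_desc _ _ _
  have : Epi g := by
    have : Epi (pushout.inl a p ≫ g) := by rw [hg1]; infer_instance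
    exact epi_of_epi (pushout.inl a p) g
  have hex : (ShortComplex.mk (pushout.inr a p) g hg2).Exact := by
    apply ShortComplex.exact_of_g_is_cokernel
    refine CokernelCofork.IsColimit.ofπ _ _
      (fun {T} k hk => hab.exact.desc (pushout.inl a p ≫ k) ?_) ?_ ?_
    · change a ≫ pushout.inl a p ≫ k = 0
      rw [pushout.condition_assoc]
      change p ≫ pushout.inr a p ≫ k = 0
      have hk' : pushout.inr a p ≫ k = 0 := hk
      rw [hk', comp_zero]
    · intro T k hk
      have hk' : pushout.inr a p ≫ k = 0 := hk
      have key := hab.exact.g_desc (pushout.inl a p ≫ k) (by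
        change a ≫ pushout.inl a p ≫ k = 0
        rw [pushout.condition_assoc, hk', comp_zero])
      refine pushout.hom_ext ?_ ?_
      · change pushout.inl a p ≫ g ≫ _ = _
        rw [reassoc_of% hg1]
        exact key
      · change pushout.inr a p ≫ g ≫ _ = _
        rw [reassoc_of% hg2, zero_comp, hk']
    · intro T k hk m hm
      have key := hab.exact.g_desc (pushout.inl a p ≫ k) (by
        have hk' : pushout.inr a p ≫ k = 0 := hk
        change a ≫ pushout.inl a p ≫ k = 0
        rw [pushout.condition_assoc, hk', comp_zero])
      have hm' : g ≫ m = k := hm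
      rw [← cancel_epi b]
      change b ≫ _ = _ at key
      rw [key, ← hm', reassoc_of% hg1]
  obtain ⟨s, hs⟩ := hext _ (pushout.inr a p) g hg2
    { exact := hex, mono_f := inferInstance, epi_g := inferInstance }
  let σ := ShortComplex.Splitting.ofExactOfSection _ hex s hs
    (inferInstanceAs (Mono (pushout.inr a p)))
  refine ⟨pushout.inl a p ≫ σ.r, ?_⟩
  rw [pushout.condition_assoc]
  have h2 : pushout.inr a p ≫ σ.r = 𝟙 W1 := σ.f_r
  rw [h2, Category.comp_id]

theorem stmt10 (R : Type u) [Ring R] (𝒲 𝒳 : Set (ModuleCat.{u} R))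
    (X1 X2 X3 W1 W3 X1' X3' : ModuleCat.{u} R)
    (a : X1 ⟶ X2) (b : X2 ⟶ X3) (wab : a ≫ b = 0) (hab : (ShortComplex.mk a b wab).ShortExact)
    (p : X1 ⟶ W1) (q : W1 ⟶ X1') (wpq : p ≫ q = 0) (hpq : (ShortComplex.mk p q wpq).ShortExact)
    (u : X3 ⟶ W3) (v : W3 ⟶ X3') (wuv : u ≫ v = 0) (huv : (ShortComplex.mk u v wuv).ShortExact)
    (hX1 : X1 ∈ 𝒳) (hX2 : X2 ∈ 𝒳) (hX3 : X3 ∈ 𝒳)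
    (hW1 : W1 ∈ 𝒲) (hW3 : W3 ∈ 𝒲) (hX1' : X1' ∈ 𝒳) (hX3' : X3' ∈ 𝒳)
    (hext : ext1Zero X3 W1) :
    ∃ (X2' : ModuleCat.{u} R) (s : X2 ⟶ W1 ⊞ W3) (t : W1 ⊞ W3 ⟶ X2')
      (c : X1' ⟶ X2') (d : X2' ⟶ X3'),
      (∃ w : s ≫ t = 0, (ShortComplex.mk s t w).ShortExact) ∧
      (∃ w : c ≫ d = 0, (ShortComplex.mk c d w).ShortExact) ∧
      a ≫ s = p ≫ biprod.inl ∧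
      s ≫ biprod.snd = b ≫ u ∧
      biprod.inl ≫ t = q ≫ c ∧
      t ≫ d = biprod.snd ≫ v := by
  obtain ⟨h, hh⟩ := stmt10_extend a b wab hab p hext
  have : Epi q := hpq.epi_g
  have : Epi v := huv.epi_g
  have exab := (ShortComplex.moduleCat_exact_iff _).1 hab.exact
  have expq := (ShortComplex.moduleCat_exact_iff _).1 hpq.exact
  have exuv := (ShortComplex.moduleCat_exact_iff _).1 huv.exact
  have ip : Function.Injective p := hpq.moduleCat_injective_f
  have iu : Function.Injective u := huv.moduleCat_injective_f
  have sb : Function.Surjective b := hab.moduleCat_surjective_g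
  have sq : Function.Surjective q := hpq.moduleCat_surjective_g
  dsimp only at exab expq exuv
  let s : X2 ⟶ W1 ⊞ W3 := biprod.lift h (b ≫ u)
  have h1 : a ≫ s = p ≫ biprod.inl := by
    apply biprod.hom_ext
    · simp [s, hh]
    · simp [s, reassoc_of% wab]
  have h2 : s ≫ biprod.snd = b ≫ u := by simp [s]
  let t : W1 ⊞ W3 ⟶ cokernel s := cokernel.π s
  have hst : s ≫ t = 0 := cokernel.condition s
  have hcw : p ≫ biprod.inl ≫ t = 0 := by
    rw [← reassoc_of% h1, hst, comp_zero]
  let c : X1' ⟶ cokernel s := hpq.exact.desc (biprod.inl ≫ t) hcw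
  have h3 : biprod.inl ≫ t = q ≫ c := (hpq.exact.g_desc (biprod.inl ≫ t) hcw).symm
  let d : cokernel s ⟶ X3' := cokernel.desc s (biprod.snd ≫ v) (by
    rw [reassoc_of% h2, wuv, comp_zero])
  have h4 : t ≫ d = biprod.snd ≫ v := cokernel.π_desc _ _ _
  have hcd : c ≫ d = 0 := by
    rw [← cancel_epi q, ← reassoc_of% h3, h4]
    simp
  have exst : (ShortComplex.mk s t hst).Exact :=
    ShortComplex.exact_of_g_is_cokernel _ (cokernelIsCokernel s)
  have exst' := (ShortComplex.moduleCat_exact_iff _).1 exst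
  dsimp only at exst'
  have st : Function.Surjective t := (ModuleCat.epi_iff_surjective t).1 inferInstance
  have e1 : ∀ x, s (a x) = (biprod.inl : W1 ⟶ W1 ⊞ W3) (p x) :=
    fun x => ConcreteCategory.congr_hom h1 x
  have e2 : ∀ x, (biprod.snd : W1 ⊞ W3 ⟶ W3) (s x) = u (b x) :=
    fun x => ConcreteCategory.congr_hom h2 x
  have e3 : ∀ x, t ((biprod.inl : W1 ⟶ W1 ⊞ W3) x) = c (q x) :=
    fun x => ConcreteCategory.congr_hom h3 x
  have e4 : ∀ x, d (t x) = v ((biprod.snd : W1 ⊞ W3 ⟶ W3) x) :=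
    fun x => ConcreteCategory.congr_hom h4 x
  have e5 : ∀ x, t (s x) = 0 := fun x => ConcreteCategory.congr_hom hst x
  have e6 : ∀ x, q (p x) = 0 := fun x => ConcreteCategory.congr_hom wpq x
  have e7 : ∀ x, (biprod.snd : W1 ⊞ W3 ⟶ W3) ((biprod.inl : W1 ⟶ W1 ⊞ W3) x) = 0 :=
    fun x => ConcreteCategory.congr_hom (biprod.inl_snd (X := W1) (Y := W3)) x
  have iinl : Function.Injective (biprod.inl : W1 ⟶ W1 ⊞ W3) :=
    (ModuleCat.mono_iff_injective _).1 inferInstance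
  have e8 : ∀ z, (biprod.snd : W1 ⊞ W3 ⟶ W3) z = 0 →
      ∃ w, (biprod.inl : W1 ⟶ W1 ⊞ W3) w = z := by
    intro z hz
    refine ⟨(biprod.fst : W1 ⊞ W3 ⟶ W1) z, ?_⟩
    have key : (biprod.inl : W1 ⟶ W1 ⊞ W3) ((biprod.fst : W1 ⊞ W3 ⟶ W1) z) +
        (biprod.inr : W3 ⟶ W1 ⊞ W3) ((biprod.snd : W1 ⊞ W3 ⟶ W3) z) = z :=
      ConcreteCategory.congr_hom (biprod.total (X := W1) (Y := W3)) z
    rwa [hz, map_zero, add_zero] at key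
  have ms : Mono s := by
    rw [ModuleCat.mono_iff_injective, injective_iff_map_eq_zero]
    intro x hx
    have hb : b x = 0 := by
      apply iu
      rw [← e2, hx, map_zero, map_zero]
    obtain ⟨y, rfl⟩ := exab x hb
    have : p y = 0 := by
      apply iinl
      rw [← e1, hx, map_zero]
    have hy : y = 0 := ip (by rw [this, map_zero])
    rw [hy, map_zero]
  have mc : Mono c := by
    rw [ModuleCat.mono_iff_injective, injective_iff_map_eq_zero]
    intro x hx
    obtain ⟨w, rfl⟩ := sq x
    rw [← e3] at hx
    obtain ⟨z, hz⟩ := exst' _ hx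
    have hb : b z = 0 := by
      apply iu
      rw [← e2, hz, e7, map_zero]
    obtain ⟨y, rfl⟩ := exab z hb
    have : p y = w := iinl (by rw [← e1, hz])
    rw [← this, e6]
  have ed : Epi d := by
    have : Epi (t ≫ d) := by rw [h4]; infer_instance
    exact epi_of_epi t d
  have excd : (ShortComplex.mk c d hcd).Exact := by
    rw [ShortComplex.moduleCat_exact_iff]
    dsimp only
    intro x hx
    obtain ⟨z, rfl⟩ := st x
    rw [e4] at hx
    obtain ⟨y, hy⟩ := exuv _ hx
    obtain ⟨x2, rfl⟩ := sb y
    obtain ⟨w, hw⟩ := e8 (z - s x2) (by rw [map_sub, e2, hy, sub_self])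
    refine ⟨q w, ?_⟩
    rw [← e3, hw, map_sub, e5, sub_zero]
  exact ⟨cokernel s, s, t, c, d,
    ⟨hst, { exact := exst, mono_f := ms, epi_g := inferInstanceAs (Epi (cokernel.π s)) }⟩,
    ⟨hcd, { exact := excd, mono_f := mc, epi_g := ed }⟩, h1, h2, h3, h4⟩

end Statements
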